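/- Let n ≥ 2, m ≥ 2, and let φ₁, …, φ_m : RS_n → RS_n be maps. The following are equivalent: (1) tr(φ₁(A₁) ⋯ φ_m(A_m)) = tr(A₁ ⋯ A_m) for all A₁, …, A_m ∈ RS_n; (2) φ₁(A₁) ⋯ φ_m(A_m) and A₁ ⋯ A_m have the same characteristic polynomial for all A₁, …, A_m ∈ RS_n; (3) there exist permutation matrices P₁, …, P_m, P_{m+1} = P₁ in P_n such that for every i ∈ {1, …, m} and every A ∈ RS_n one has φ_i(A) − P_i A_DS P_{i+1}ᵀ ∈ R_n, i.e. φ_i(A) = P_i A_DS P_{i+1}ᵀ + γ_i(A) with γ_i(A) := φ_i(A)_R ∈ R_n. Moreover, if these equivalent conditions hold and φ_ℓ is linear for some ℓ ∈ {1, …, m}, then with the P_i's from (3): when n = 2 there exists c_ℓ ∈ [−1, 1] such that φ_ℓ(A) = P_ℓ A_DS P_{ℓ+1}ᵀ + c_ℓ·A_R P_{ℓ+1}ᵀ for all A ∈ RS_2, and when n ≥ 3 one has φ_ℓ(A) = P_ℓ A P_{ℓ+1}ᵀ for all A ∈ RS_n. -/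

import Mathlib

/-!
Write `X ≡ Y` when `X - Y` has all rows equal (`ModR`); between row stochastic matrices this is
congruence modulo `R_n`, so condition (3) says that `φ_i(A) ≡ P_i A P_{i+1}ᵀ` (`inRn_iff`). Right
multiplication, and left multiplication by a row stochastic matrix, respect `≡`. Adding an element
of `R_n` to a row stochastic matrix does not change the characteristic polynomial, because the
all-ones vector is an eigenvector (`ModR.charpoly_eq`). So (3) implies (2), and (2) implies (1).

The main point is that (1) implies (3). Fixing all but two of the variables at `1` produces two maps
`φ`, `χ` of row stochastic matrices with `tr(φ(A) χ(B)) = tr(A B)` (`TracePair`). Modulo `R_n` row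
stochastic matrices are represented by matrices with zero row and column sums, which the centred
matrices span and on which the trace form is nondegenerate. Hence `φ` and `χ` induce invertible
linear maps, adjoint-inverse to each other. The polytope of centred row stochastic matrices is
self-polar up to sign (`exists_RS_of_trace`), so the linear map preserves it in both directions and
preserves extreme points: `φ` sends 0-1 matrices of nonconstant maps to 0-1 matrices
(`TracePair.map_fMat`). After normalizing to `φ(1) = χ(1) = 1`, the matrix `U a b` of the map moving
only `a`, to `b`, has an image of trace `n - 1`, hence of the same form. For `a ≠ c`, the sum
`U a b + U c d` is the identity plus a row stochastic matrix, and this fails modulo `R_n` when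
`a = c`, so the moved index of the image depends on `a` alone; the traces of products
`U a b * U c d` then show that `χ` acts on the matrices `U a b` by relabelling with one permutation.
Since pairings with `1` and all `U a b` determine a matrix modulo equal rows (`modR_of_trace`),
`φ(A) ≡ P A Q` for permutation matrices `P` and `Q` (`TracePair.classify`). This gives `φ₁`, and the
relation for the product of the remaining maps; the latter are then found one by one (`chain`), as
two row stochastic matrices whose product has trace `n` are mutually inverse permutation matrices.

If `φ_ℓ` is linear, untwist it to a linear `ψ` with `ψ(A) ≡ A`. A 0-1 matrix of a nonconstant map is
the only row stochastic matrix in its class, so `ψ` fixes it. For `n ≥ 3` these matrices span, so `ψ`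
is the identity; for `n = 2` only the image of `e e₁ᵀ` is free, whose first entry `t` gives
`c_ℓ = 2 t - 1`.
-/

open Matrix

/-- Membership in `⟨DS_n⟩`: `∃ c, A e = c e ∧ Aᵀ e = c e`, where `e` is the all-ones vector. -/
def InSpanDS {n : ℕ} (A : Matrix (Fin n) (Fin n) ℝ) : Prop :=
  ∃ c : ℝ, A *ᵥ (fun _ => (1:ℝ)) = c • (fun _ => (1:ℝ)) ∧
    Aᵀ *ᵥ (fun _ => (1:ℝ)) = c • (fun _ => (1:ℝ))

/-- Membership in `⟨RS_n⟩`: `∃ c, A e = c e`. -/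
def InSpanRS {n : ℕ} (A : Matrix (Fin n) (Fin n) ℝ) : Prop :=
  ∃ c : ℝ, A *ᵥ (fun _ => (1:ℝ)) = c • (fun _ => (1:ℝ))

/-- Membership in `R_n = {e vᵀ : vᵀ e = 0}`. -/
def InRn {n : ℕ} (A : Matrix (Fin n) (Fin n) ℝ) : Prop :=
  ∃ v : Fin n → ℝ, (∑ i, v i) = 0 ∧ A = vecMulVec (fun _ => (1:ℝ)) v

/-- Membership in `C_n = {v eᵀ : vᵀ e = 0}`. -/
def InCn {n : ℕ} (A : Matrix (Fin n) (Fin n) ℝ) : Prop :=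
  ∃ v : Fin n → ℝ, (∑ i, v i) = 0 ∧ A = vecMulVec v (fun _ => (1:ℝ))

/-- `A` is doubly stochastic. -/
def IsDS {n : ℕ} (A : Matrix (Fin n) (Fin n) ℝ) : Prop :=
  (∀ i j, 0 ≤ A i j) ∧ (∀ i, ∑ j, A i j = 1) ∧ (∀ j, ∑ i, A i j = 1)

/-- `A` is row stochastic. -/
def IsRS {n : ℕ} (A : Matrix (Fin n) (Fin n) ℝ) : Prop :=
  (∀ i j, 0 ≤ A i j) ∧ (∀ i, ∑ j, A i j = 1)

/-- `A` is column stochastic. -/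
def IsCS {n : ℕ} (A : Matrix (Fin n) (Fin n) ℝ) : Prop :=
  (∀ i j, 0 ≤ A i j) ∧ (∀ j, ∑ i, A i j = 1)

/-- `A` is a permutation matrix. -/
def IsPerm {n : ℕ} (A : Matrix (Fin n) (Fin n) ℝ) : Prop :=
  ∃ σ : Equiv.Perm (Fin n), A = σ.permMatrix ℝ

/-- `s_A = (Σ_{i,j} a_{ij})/n²`. -/
noncomputable def sAvg {n : ℕ} (A : Matrix (Fin n) (Fin n) ℝ) : ℝ :=
  (∑ i, ∑ j, A i j) / (n ^ 2 : ℝ)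

/-- `r(A)` with `i`-th entry `(Σ_k a_{ki})/n − s_A`. -/
noncomputable def rVec {n : ℕ} (A : Matrix (Fin n) (Fin n) ℝ) : Fin n → ℝ :=
  fun i => (∑ k, A k i) / (n : ℝ) - sAvg A

/-- `c(A)` with `i`-th entry `(Σ_k a_{ik})/n − s_A`. -/
noncomputable def cVec {n : ℕ} (A : Matrix (Fin n) (Fin n) ℝ) : Fin n → ℝ :=
  fun i => (∑ k, A i k) / (n : ℝ) - sAvg A

/-- `A_R = e · r(A)ᵀ`. -/
noncomputable def partR {n : ℕ} (A : Matrix (Fin n) (Fin n) ℝ) : Matrix (Fin n) (Fin n) ℝ :=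
  vecMulVec (fun _ => (1:ℝ)) (rVec A)

/-- `A_C = c(A) · eᵀ`. -/
noncomputable def partC {n : ℕ} (A : Matrix (Fin n) (Fin n) ℝ) : Matrix (Fin n) (Fin n) ℝ :=
  vecMulVec (cVec A) (fun _ => (1:ℝ))

/-- `A_DS = A − A_R − A_C`. -/
noncomputable def partDS {n : ℕ} (A : Matrix (Fin n) (Fin n) ℝ) : Matrix (Fin n) (Fin n) ℝ :=
  A - partR A - partC A

/-! ### 0-1 matrices and congruence modulo equal rows -/

/-- The 0-1 row stochastic matrix of a self-map: row `i` has its one in column `f i`. -/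
def fMat {n : ℕ} (f : Fin n → Fin n) : Matrix (Fin n) (Fin n) ℝ :=
  Matrix.of fun i j => if f i = j then 1 else 0

/-- Congruence modulo matrices all of whose rows coincide. Between row stochastic matrices it is
congruence modulo `R_n`, as the common row `v` then automatically sums to zero. -/
def ModR {n : ℕ} (X Y : Matrix (Fin n) (Fin n) ℝ) : Prop :=
  ∃ v : Fin n → ℝ, ∀ i j, X i j = Y i j + v j

/-- The map fixing everything except `a`, which is sent to `b`, as a 0-1 matrix. -/
def U {n : ℕ} (a b : Fin n) : Matrix (Fin n) (Fin n) ℝ := fMat (Function.update id a b)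

lemma fMat_apply {n : ℕ} (f : Fin n → Fin n) (i j : Fin n) :
    fMat f i j = if f i = j then 1 else 0 := rfl

lemma fMat_mul_apply {n : ℕ} (f : Fin n → Fin n) (X : Matrix (Fin n) (Fin n) ℝ) (i j : Fin n) :
    (fMat f * X) i j = X (f i) j := by
  simp [Matrix.mul_apply, fMat_apply]

lemma mul_fMat_apply {n : ℕ} (σ : Equiv.Perm (Fin n)) (X : Matrix (Fin n) (Fin n) ℝ)
    (i j : Fin n) : (X * fMat σ) i j = X i (σ.symm j) := by
  rw [Matrix.mul_apply, Finset.sum_eq_single (σ.symm j)]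
  · simp [fMat_apply]
  · intro b _ hb
    have : σ b ≠ j := fun h => hb (by simp [← h])
    simp [fMat_apply, this]
  · simp

lemma fMat_one {n : ℕ} : fMat (id : Fin n → Fin n) = 1 := by
  ext i j
  simp [fMat_apply, Matrix.one_apply]

lemma fMat_symm_mul {n : ℕ} (σ : Equiv.Perm (Fin n)) : fMat σ.symm * fMat σ = 1 := by
  ext i j
  simp [fMat_mul_apply, fMat_apply, Matrix.one_apply]

lemma fMat_mul_symm {n : ℕ} (σ : Equiv.Perm (Fin n)) : fMat σ * fMat σ.symm = 1 := by
  ext i j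
  simp [fMat_mul_apply, fMat_apply, Matrix.one_apply]

lemma fMat_transpose {n : ℕ} (σ : Equiv.Perm (Fin n)) : (fMat σ)ᵀ = fMat σ.symm := by
  ext i j
  simp only [Matrix.transpose_apply, fMat_apply]
  congr 1
  rw [eq_iff_iff, Equiv.symm_apply_eq]
  exact eq_comm

lemma isPerm_iff {n : ℕ} (A : Matrix (Fin n) (Fin n) ℝ) :
    IsPerm A ↔ ∃ σ : Equiv.Perm (Fin n), A = fMat σ := by
  have h (σ : Equiv.Perm (Fin n)) : σ.permMatrix ℝ = fMat σ := by
    ext i j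
    simp [fMat_apply, Equiv.Perm.permMatrix, PEquiv.toMatrix_apply, eq_comm]
  simp [IsPerm, h]

lemma isRS_fMat {n : ℕ} (f : Fin n → Fin n) : IsRS (fMat f) := by
  refine ⟨fun i j => ?_, fun i => by simp [fMat_apply]⟩
  rw [fMat_apply]
  split_ifs <;> norm_num

lemma isRS_one {n : ℕ} : IsRS (1 : Matrix (Fin n) (Fin n) ℝ) := fMat_one ▸ isRS_fMat id

lemma IsRS.mul {n : ℕ} {A B : Matrix (Fin n) (Fin n) ℝ} (hA : IsRS A) (hB : IsRS B) :
    IsRS (A * B) := by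
  refine ⟨fun i j => ?_, fun i => ?_⟩
  · rw [Matrix.mul_apply]
    exact Finset.sum_nonneg fun k _ => mul_nonneg (hA.1 _ _) (hB.1 _ _)
  · simp only [Matrix.mul_apply]
    rw [Finset.sum_comm]
    simp [← Finset.mul_sum, hB.2, hA.2]

lemma isRS_prod {n : ℕ} : ∀ {m : ℕ} (B : Fin m → Matrix (Fin n) (Fin n) ℝ),
    (∀ i, IsRS (B i)) → IsRS (List.ofFn B).prod
  | 0, _, _ => by simpa using isRS_one
  | m + 1, B, h => by
    rw [List.ofFn_succ, List.prod_cons]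
    exact (h 0).mul (isRS_prod _ fun i => h i.succ)

lemma IsRS.le_one {n : ℕ} {A : Matrix (Fin n) (Fin n) ℝ} (hA : IsRS A) (i j : Fin n) :
    A i j ≤ 1 := by
  rw [← hA.2 i]
  exact Finset.single_le_sum (fun k _ => hA.1 i k) (Finset.mem_univ j)

lemma IsRS.eq_zero_of_eq_one {n : ℕ} {A : Matrix (Fin n) (Fin n) ℝ} (hA : IsRS A) {i j : Fin n}
    (h : A i j = 1) {k : Fin n} (hk : k ≠ j) : A i k = 0 := by
  have h1 := hA.2 i
  rw [← Finset.add_sum_erase _ _ (Finset.mem_univ j), h] at h1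
  exact (Finset.sum_eq_zero_iff_of_nonneg fun k _ => hA.1 i k).1 (by linarith) k
    (Finset.mem_erase.2 ⟨hk, Finset.mem_univ k⟩)

lemma IsRS.eq_fMat {n : ℕ} {A : Matrix (Fin n) (Fin n) ℝ} (hA : IsRS A) {f : Fin n → Fin n}
    (h : ∀ i j, j ≠ f i → A i j = 0) : A = fMat f := by
  ext i j
  rw [fMat_apply]
  split_ifs with hj
  · have h1 := hA.2 i
    rwa [Finset.sum_eq_single (f i) (fun b _ hb => h i b hb) (by simp), hj] at h1
  · exact h i j (Ne.symm hj)

lemma IsRS.exists_pos {n : ℕ} {A : Matrix (Fin n) (Fin n) ℝ} (hA : IsRS A) (i : Fin n) :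
    ∃ j, 0 < A i j := by
  by_contra! h
  have h1 := Finset.sum_nonpos fun j (_ : j ∈ Finset.univ) => h j
  rw [hA.2 i] at h1
  linarith

/-- Two row stochastic matrices whose product has the largest possible trace `n` are mutually
inverse permutation matrices. -/
lemma perm_of_trace {n : ℕ} {A B : Matrix (Fin n) (Fin n) ℝ} (hA : IsRS A) (hB : IsRS B)
    (h : (A * B).trace = n) : ∃ σ : Equiv.Perm (Fin n), A = fMat σ ∧ B = fMat σ.symm := by
  have h0 : ∑ i, ∑ j, A i j * (1 - B j i) = 0 := by
    have h1 : ∑ i, ∑ j, A i j * B j i = n := by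
      simpa [Matrix.trace, Matrix.mul_apply] using h
    simp [mul_sub, hA.2, h1]
  have hnn : ∀ i j, 0 ≤ A i j * (1 - B j i) := fun i j =>
    mul_nonneg (hA.1 _ _) (by linarith [hB.le_one j i])
  have key : ∀ i j, A i j * (1 - B j i) = 0 := by
    intro i j
    have h2 := (Finset.sum_eq_zero_iff_of_nonneg
      (fun i _ => Finset.sum_nonneg fun j _ => hnn i j)).1 h0 i (Finset.mem_univ i)
    exact (Finset.sum_eq_zero_iff_of_nonneg (fun j _ => hnn i j)).1 h2 j (Finset.mem_univ j)
  choose f hf using hA.exists_pos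
  have hB1 : ∀ i, B (f i) i = 1 := by
    intro i
    rcases mul_eq_zero.1 (key i (f i)) with h | h
    · exact absurd h (hf i).ne'
    · linarith
  have hinj : Function.Injective f := by
    intro i k hik
    by_contra hne
    have := hB.eq_zero_of_eq_one (hB1 i) (Ne.symm hne)
    rw [hik, hB1 k] at this
    norm_num at this
  let σ : Equiv.Perm (Fin n) := Equiv.ofBijective f (Finite.injective_iff_bijective.1 hinj)
  have hσ : ∀ i, σ i = f i := fun i => rfl
  have hBσ : B = fMat σ.symm := by
    apply hB.eq_fMat
    intro i j hj
    have h1 := hB1 (σ.symm i)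
    rw [← hσ, Equiv.apply_symm_apply] at h1
    exact hB.eq_zero_of_eq_one h1 hj
  refine ⟨σ, hA.eq_fMat fun i j hj => ?_, hBσ⟩
  have h1 := key i j
  have h2 : σ.symm j ≠ i := fun h => hj (by rw [← h, Equiv.apply_symm_apply])
  rw [hBσ, fMat_apply, if_neg h2] at h1
  linarith

lemma ModR.symm {n : ℕ} {X Y : Matrix (Fin n) (Fin n) ℝ} (h : ModR X Y) : ModR Y X := by
  obtain ⟨v, hv⟩ := h
  exact ⟨fun j => -v j, fun i j => by rw [hv]; ring⟩

lemma ModR.trans {n : ℕ} {X Y Z : Matrix (Fin n) (Fin n) ℝ} (h : ModR X Y) (h' : ModR Y Z) :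
    ModR X Z := by
  obtain ⟨v, hv⟩ := h
  obtain ⟨w, hw⟩ := h'
  exact ⟨fun j => w j + v j, fun i j => by rw [hv, hw]; ring⟩

lemma ModR.mul_right {n : ℕ} {X Y : Matrix (Fin n) (Fin n) ℝ} (h : ModR X Y)
    (Z : Matrix (Fin n) (Fin n) ℝ) : ModR (X * Z) (Y * Z) := by
  obtain ⟨v, hv⟩ := h
  refine ⟨fun j => ∑ k, v k * Z k j, fun i j => ?_⟩
  simp [Matrix.mul_apply, hv, add_mul, Finset.sum_add_distrib]

lemma ModR.mul_left {n : ℕ} {X Y Z : Matrix (Fin n) (Fin n) ℝ} (h : ModR X Y) (hZ : IsRS Z) :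
    ModR (Z * X) (Z * Y) := by
  obtain ⟨v, hv⟩ := h
  refine ⟨v, fun i j => ?_⟩
  simp [Matrix.mul_apply, hv, mul_add, Finset.sum_add_distrib, ← Finset.sum_mul, hZ.2]

lemma ModR.trace_eq {n : ℕ} (hn : 0 < n) {X Y : Matrix (Fin n) (Fin n) ℝ} (h : ModR X Y)
    (hX : IsRS X) (hY : IsRS Y) : X.trace = Y.trace := by
  obtain ⟨v, hv⟩ := h
  have h1 := hX.2 ⟨0, hn⟩
  simp only [hv, Finset.sum_add_distrib, hY.2] at h1
  simp only [Matrix.trace, Matrix.diag_apply, hv, Finset.sum_add_distrib]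
  linarith

lemma trace_U_mul {n : ℕ} (a b : Fin n) (X : Matrix (Fin n) (Fin n) ℝ) :
    (U a b * X).trace = X.trace - X a a + X b a := by
  simp only [Matrix.trace, Matrix.diag_apply, U, fMat_mul_apply]
  rw [← Finset.add_sum_erase _ _ (Finset.mem_univ a),
    ← Finset.add_sum_erase _ (fun i => X i i) (Finset.mem_univ a)]
  rw [Finset.sum_congr rfl (g := fun i => X i i)]
  · simp
    ring
  · intro i hi
    simp [Function.update_of_ne (Finset.ne_of_mem_erase hi)]

/-- Modulo constant rows, a matrix is determined by its trace pairings with the identity and the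
matrices `U a b`, because `U a b - 1` reads off `X b a - X a a`. -/
lemma modR_of_trace {n : ℕ} {X Y : Matrix (Fin n) (Fin n) ℝ} (h1 : X.trace = Y.trace)
    (hU : ∀ a b, a ≠ b → (U a b * X).trace = (U a b * Y).trace) : ModR X Y := by
  refine ⟨fun a => X a a - Y a a, fun b a => ?_⟩
  rcases eq_or_ne a b with rfl | hab
  · ring
  · have := hU a b hab
    rw [trace_U_mul, trace_U_mul] at this
    linarith

/-! ### The trace pairing on centred matrices -/

/-- Two maps adjoint-inverse to each other on a spanning set, for a nondegenerate pairing, extend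
to surjective linear maps with the same property on the whole space. -/
lemma exists_linear {V : Type*} [AddCommGroup V] [Module ℝ V] [FiniteDimensional ℝ V]
    (β : V →ₗ[ℝ] V →ₗ[ℝ] ℝ) (hl : ∀ x, (∀ y, β x y = 0) → x = 0)
    (hr : ∀ y, (∀ x, β x y = 0) → y = 0) {ι : Type*} (s f g : ι → V)
    (hs : Submodule.span ℝ (Set.range s) = ⊤) (h : ∀ i j, β (f i) (g j) = β (s i) (s j)) :
    ∃ L M : V →ₗ[ℝ] V, Function.Surjective L ∧ (∀ i, f i = L (s i)) ∧
      (∀ i, g i = M (s i)) ∧ ∀ x y, β (L x) (M y) = β x y := by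
  obtain ⟨κ, a, -, hspan, hli⟩ := exists_linearIndependent' ℝ s
  let b : Module.Basis κ ℝ V := Module.Basis.mk hli (by rw [hspan, hs])
  have hb : ∀ k, b k = s (a k) := fun k => by simp [b]
  let L : V →ₗ[ℝ] V := b.constr ℝ fun k => f (a k)
  let M : V →ₗ[ℝ] V := b.constr ℝ fun k => g (a k)
  have hL : ∀ k, L (b k) = f (a k) := fun k => by simp [L]
  have hM : ∀ k, M (b k) = g (a k) := fun k => by simp [M]
  have hLM : ∀ x y, β (L x) (M y) = β x y := by
    have : β.compl₁₂ L M = β := by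
      refine b.ext fun k => b.ext fun l => ?_
      rw [LinearMap.compl₁₂_apply, hL, hM, h, hb, hb]
    intro x y
    conv_rhs => rw [← this, LinearMap.compl₁₂_apply]
  have hLs : Function.Surjective L := by
    rw [← LinearMap.injective_iff_surjective, ← LinearMap.ker_eq_bot, LinearMap.ker_eq_bot']
    intro x hx
    exact hl x fun y => by rw [← hLM, hx]; simp
  have hMs : Function.Surjective M := by
    rw [← LinearMap.injective_iff_surjective, ← LinearMap.ker_eq_bot, LinearMap.ker_eq_bot']
    intro x hx
    exact hr x fun y => by rw [← hLM, hx]; simp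
  have e1 : ∀ i y, β (f i) (M y) = β (s i) y := by
    intro i y
    have : (β (f i)).comp M = β (s i) := b.ext fun k => by
      rw [LinearMap.comp_apply, hM, h, hb]
    rw [← this, LinearMap.comp_apply]
  have e2 : ∀ i x, β (L x) (g i) = β x (s i) := by
    intro i x
    have : (β.flip (g i)).comp L = β.flip (s i) := b.ext fun k => by
      rw [LinearMap.comp_apply, hL, LinearMap.flip_apply, LinearMap.flip_apply, h, hb]
    exact LinearMap.congr_fun this x
  refine ⟨L, M, hLs, fun i => ?_, fun i => ?_, hLM⟩
  · rw [← sub_eq_zero]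
    refine hl _ fun y => ?_
    obtain ⟨y, rfl⟩ := hMs y
    rw [map_sub, LinearMap.sub_apply, e1, hLM, sub_self]
  · rw [← sub_eq_zero]
    refine hr _ fun x => ?_
    obtain ⟨x, rfl⟩ := hLs x
    rw [map_sub, e2, hLM, sub_self]

/-- The matrices all of whose row sums and column sums vanish: a model of the affine
span of the row stochastic matrices modulo `R_n`, with the matrix all of whose entries are `1 / n` as
origin. -/
def zeroSums (n : ℕ) : Submodule ℝ (Matrix (Fin n) (Fin n) ℝ) where
  carrier := {N | (∀ i, ∑ j, N i j = 0) ∧ ∀ j, ∑ i, N i j = 0}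
  add_mem' := by
    rintro a b ⟨h1, h2⟩ ⟨h3, h4⟩
    exact ⟨fun i => by simp [Finset.sum_add_distrib, h1, h3],
      fun i => by simp [Finset.sum_add_distrib, h2, h4]⟩
  zero_mem' := by simp
  smul_mem' := by
    rintro c a ⟨h1, h2⟩
    exact ⟨fun i => by simp [← Finset.mul_sum, h1], fun i => by simp [← Finset.mul_sum, h2]⟩

/-- The trace pairing. -/
noncomputable def trForm (n : ℕ) : zeroSums n →ₗ[ℝ] zeroSums n →ₗ[ℝ] ℝ :=
  LinearMap.mk₂ ℝ (fun x y => (x.1 * y.1).trace)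
    (by intros; simp [add_mul]) (by intros; simp)
    (by intros; simp [mul_add]) (by intros; simp)

lemma trForm_apply {n : ℕ} (x y : zeroSums n) : trForm n x y = (x.1 * y.1).trace := rfl

lemma trForm_nondeg {n : ℕ} (x : zeroSums n) (h : ∀ y, trForm n x y = 0) : x = 0 := by
  have h1 := h ⟨x.1ᵀ, x.2.2, x.2.1⟩
  rw [trForm_apply] at h1
  have h2 : x.1 = 0 := by
    rw [← Matrix.trace_mul_conjTranspose_self_eq_zero_iff, Matrix.conjTranspose_eq_transpose_of_trivial]
    exact h1
  exact Subtype.ext h2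

lemma trForm_comm {n : ℕ} (x y : zeroSums n) : trForm n x y = trForm n y x := by
  rw [trForm_apply, trForm_apply, Matrix.trace_mul_comm]

/-- Each column of a row stochastic matrix centred at its mean. -/
noncomputable def ctr {n : ℕ} (hn : 0 < n) (A : {A : Matrix (Fin n) (Fin n) ℝ // IsRS A}) :
    zeroSums n :=
  ⟨Matrix.of fun i j => A.1 i j - (∑ k, A.1 k j) / n, by
    have hn' : (n : ℝ) ≠ 0 := by positivity
    refine ⟨fun i => ?_, fun j => ?_⟩
    · simp only [Matrix.of_apply, Finset.sum_sub_distrib, A.2.2, ← Finset.sum_div]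
      rw [Finset.sum_comm]
      simp [A.2.2, hn']
    · simp [Finset.sum_sub_distrib]
      field_simp
      simp⟩

lemma ctr_apply {n : ℕ} (hn : 0 < n) (A : {A : Matrix (Fin n) (Fin n) ℝ // IsRS A})
    (i j : Fin n) : (ctr hn A).1 i j = A.1 i j - (∑ k, A.1 k j) / n := rfl

lemma trace_mul_ctr {n : ℕ} (hn : 0 < n) (A : {A : Matrix (Fin n) (Fin n) ℝ // IsRS A})
    (X : Matrix (Fin n) (Fin n) ℝ) (c : ℝ) (hX : ∀ i, ∑ j, X i j = c) :
    (X * (ctr hn A).1).trace = (X * A.1).trace - c := by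
  simp only [Matrix.trace, Matrix.diag_apply, Matrix.mul_apply, ctr_apply, mul_sub,
    Finset.sum_sub_distrib, ← Finset.sum_mul, hX, ← Finset.mul_sum, ← Finset.sum_div]
  rw [Finset.sum_comm (f := fun i k => A.1 k i)]
  have hn' : (n : ℝ) ≠ 0 := by positivity
  simp [A.2.2, hn']

lemma trForm_ctr {n : ℕ} (hn : 0 < n) (A B : {A : Matrix (Fin n) (Fin n) ℝ // IsRS A}) :
    trForm n (ctr hn A) (ctr hn B) = (A.1 * B.1).trace - 1 := by
  rw [trForm_apply, trace_mul_ctr hn B _ 0 (ctr hn A).2.1, Matrix.trace_mul_comm,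
    trace_mul_ctr hn A _ 1 B.2.2, Matrix.trace_mul_comm, sub_zero]

lemma ModR_iff_ctr {n : ℕ} (hn : 0 < n) (A B : {A : Matrix (Fin n) (Fin n) ℝ // IsRS A}) :
    ModR A.1 B.1 ↔ ctr hn A = ctr hn B := by
  have hn' : (n : ℝ) ≠ 0 := by positivity
  constructor
  · rintro ⟨v, hv⟩
    ext i j
    simp only [ctr_apply, hv, Finset.sum_add_distrib]
    simp
    field_simp
    ring
  · intro h
    refine ⟨fun j => (∑ k, A.1 k j) / n - (∑ k, B.1 k j) / n, fun i j => ?_⟩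
    have := congrArg (fun X : zeroSums n => X.1 i j) h
    simp only [ctr_apply] at this
    linarith

lemma span_ctr {n : ℕ} (hn : 0 < n) : Submodule.span ℝ (Set.range (ctr hn)) = ⊤ := by
  have hn' : (n : ℝ) ≠ 0 := by positivity
  rw [eq_top_iff]
  rintro N -
  -- A small multiple of `N` added to the matrix with all entries `1 / n` is row stochastic.
  set K : ℝ := 1 + ∑ i, ∑ j, |N.1 i j| with hK
  have hK0 : 0 < K := by positivity
  have hle : ∀ i j, |N.1 i j| ≤ K := by
    intro i j
    have h1 : |N.1 i j| ≤ ∑ j, |N.1 i j| :=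
      Finset.single_le_sum (f := fun j => |N.1 i j|) (fun j _ => abs_nonneg _) (Finset.mem_univ j)
    have h2 : ∑ j, |N.1 i j| ≤ ∑ i, ∑ j, |N.1 i j| := Finset.single_le_sum (f := fun i => ∑ j, |N.1 i j|)
      (fun i _ => Finset.sum_nonneg fun j _ => abs_nonneg _) (Finset.mem_univ i)
    linarith
  have hRS : IsRS (Matrix.of fun i j => (1 / n : ℝ) + (1 / (n * K)) * N.1 i j) := by
    refine ⟨fun i j => ?_, fun i => ?_⟩
    · have h1 := neg_le_of_abs_le (hle i j)
      have : (1 / n : ℝ) + (1 / (n * K)) * N.1 i j = (1 / (n * K)) * (K + N.1 i j) := by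
        field_simp
      rw [Matrix.of_apply, this]
      have : 0 ≤ K + N.1 i j := by linarith
      positivity
    · simp [Finset.sum_add_distrib, ← Finset.mul_sum, N.2.1, hn']
  have : N = (n * K) • ctr hn ⟨_, hRS⟩ := by
    ext i j
    have : (((n * K) • ctr hn ⟨_, hRS⟩ : zeroSums n) : Matrix (Fin n) (Fin n) ℝ) i j =
      (n * K) * (ctr hn ⟨_, hRS⟩).1 i j := rfl
    rw [this, ctr_apply]
    simp only [Matrix.of_apply, Finset.sum_add_distrib, ← Finset.mul_sum, N.2.2]
    simp
    field_simp
    ring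
  rw [this]
  exact Submodule.smul_mem _ _ (Submodule.subset_span ⟨_, rfl⟩)

/-- The polytope of centred row stochastic matrices is, up to sign, self-polar for the trace
pairing: the pairing of `Y` with `fMat g`, where `g j` is the row of the least entry of column `j`,
bounds the sum of the column minima of `Y` below by `-1`, which leaves room to make all entries
nonnegative by adding a constant to each column. -/
lemma exists_RS_of_trace {n : ℕ} (hn : 0 < n) (Y : zeroSums n)
    (h : ∀ C : {A : Matrix (Fin n) (Fin n) ℝ // IsRS A}, -1 ≤ trForm n Y (ctr hn C)) :
    ∃ B : {A : Matrix (Fin n) (Fin n) ℝ // IsRS A}, ctr hn B = Y := by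
  have hn' : (n : ℝ) ≠ 0 := by positivity
  have : Nonempty (Fin n) := ⟨⟨0, hn⟩⟩
  have hmin : ∀ j, ∃ i, ∀ k, Y.1 i j ≤ Y.1 k j := fun j => Finite.exists_min fun i => Y.1 i j
  choose g hg using hmin
  have h1 := h ⟨fMat g, isRS_fMat g⟩
  rw [trForm_apply, trace_mul_ctr hn _ _ 0 Y.2.1, sub_zero, Matrix.trace_mul_comm] at h1
  simp only [Matrix.trace, Matrix.diag_apply, fMat_mul_apply] at h1
  set s := ∑ j, Y.1 (g j) j
  have hRS : IsRS (Matrix.of fun i j => Y.1 i j - Y.1 (g j) j + (1 + s) / n) := by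
    refine ⟨fun i j => ?_, fun i => ?_⟩
    · have := hg j i
      have : 0 ≤ (1 + s) / n := div_nonneg (by linarith) (by positivity)
      simp only [Matrix.of_apply]
      linarith
    · simp only [Matrix.of_apply, Finset.sum_add_distrib, Finset.sum_sub_distrib, Y.2.1]
      simp
      field_simp
      simp only [s]
      ring
  refine ⟨⟨_, hRS⟩, ?_⟩
  ext i j
  rw [ctr_apply]
  simp only [Matrix.of_apply, Finset.sum_add_distrib, Finset.sum_sub_distrib, Y.2.2]
  simp
  field_simp
  ring

/-! ### Trace-preserving pairs of maps -/

/-- A pair of self-maps of the row stochastic matrices preserving the trace of products. -/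
def TracePair {n : ℕ} (φ χ : Matrix (Fin n) (Fin n) ℝ → Matrix (Fin n) (Fin n) ℝ) : Prop :=
  (∀ A, IsRS A → IsRS (φ A)) ∧ (∀ A, IsRS A → IsRS (χ A)) ∧
    ∀ A B, IsRS A → IsRS B → (φ A * χ B).trace = (A * B).trace

lemma TracePair.symm {n : ℕ} {φ χ : Matrix (Fin n) (Fin n) ℝ → Matrix (Fin n) (Fin n) ℝ}
    (h : TracePair φ χ) : TracePair χ φ :=
  ⟨h.2.1, h.1, fun A B hA hB => by rw [Matrix.trace_mul_comm, h.2.2 B A hB hA,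
    Matrix.trace_mul_comm]⟩

lemma TracePair.exists_linear {n : ℕ} (hn : 0 < n)
    {φ χ : Matrix (Fin n) (Fin n) ℝ → Matrix (Fin n) (Fin n) ℝ} (h : TracePair φ χ) :
    ∃ L M : zeroSums n →ₗ[ℝ] zeroSums n, Function.Surjective L ∧
      (∀ A : {A : Matrix (Fin n) (Fin n) ℝ // IsRS A},
        ctr hn ⟨φ A.1, h.1 _ A.2⟩ = L (ctr hn A)) ∧
      (∀ A : {A : Matrix (Fin n) (Fin n) ℝ // IsRS A},
        ctr hn ⟨χ A.1, h.2.1 _ A.2⟩ = M (ctr hn A)) ∧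
      ∀ x y, trForm n (L x) (M y) = trForm n x y := by
  refine _root_.exists_linear (trForm n) trForm_nondeg
    (fun y hy => trForm_nondeg y fun x => by rw [trForm_comm, hy]) (ctr hn)
    (fun A => ctr hn ⟨φ A.1, h.1 _ A.2⟩) (fun A => ctr hn ⟨χ A.1, h.2.1 _ A.2⟩) (span_ctr hn) ?_
  intro A B
  rw [trForm_ctr, trForm_ctr, h.2.2 _ _ A.2 B.2]

/-- `φ` respects the parallelogram relation `A + B = C + D`, modulo constant rows. -/
lemma TracePair.parallelogram {n : ℕ} (hn : 0 < n)
    {φ χ : Matrix (Fin n) (Fin n) ℝ → Matrix (Fin n) (Fin n) ℝ} (h : TracePair φ χ)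
    {A B C D : Matrix (Fin n) (Fin n) ℝ} (hA : IsRS A) (hB : IsRS B) (hC : IsRS C) (hD : IsRS D)
    (hsum : A + B = C + D) : ModR (φ A + φ B) (φ C + φ D) := by
  obtain ⟨L, M, -, hL, -, -⟩ := h.exists_linear hn
  have hs : ctr hn ⟨A, hA⟩ + ctr hn ⟨B, hB⟩ = ctr hn ⟨C, hC⟩ + ctr hn ⟨D, hD⟩ := by
    ext i j
    have e : ∀ k, A k j + B k j = C k j + D k j := fun k => congrFun (congrFun hsum k) j
    have e' : ∑ k, A k j + ∑ k, B k j = ∑ k, C k j + ∑ k, D k j := by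
      rw [← Finset.sum_add_distrib, ← Finset.sum_add_distrib, Finset.sum_congr rfl fun k _ => e k]
    have e'' : (∑ k, A k j) / n + (∑ k, B k j) / n =
        (∑ k, C k j) / (n : ℝ) + (∑ k, D k j) / n := by
      rw [← add_div, e', add_div]
    simp only [Submodule.coe_add, Matrix.add_apply, ctr_apply]
    linarith [e i]
  have h1 := congrArg L hs
  rw [map_add, map_add, ← hL, ← hL, ← hL, ← hL] at h1
  refine ⟨fun j => (∑ k, φ A k j) / n + (∑ k, φ B k j) / n - (∑ k, φ C k j) / n
    - (∑ k, φ D k j) / n, fun i j => ?_⟩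
  have h2 := congrArg (fun X : zeroSums n => X.1 i j) h1
  simp only [Submodule.coe_add, Matrix.add_apply, ctr_apply] at h2
  simp only [Matrix.add_apply]
  linarith

/-- For nonconstant `f` the matrix `fMat f` is an extreme point of the row stochastic matrices
even modulo constant rows. -/
lemma extreme_fMat {n : ℕ} {f : Fin n → Fin n} (hf : ∀ j, ∃ i, f i ≠ j)
    {B C : Matrix (Fin n) (Fin n) ℝ} (hB : IsRS B) (hC : IsRS C) {v : Fin n → ℝ}
    (h : ∀ i j, B i j + C i j = 2 * fMat f i j + v j) : B = fMat f := by
  have hv0 : ∀ j, 0 ≤ v j := by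
    intro j
    obtain ⟨i, hi⟩ := hf j
    have := h i j
    rw [fMat_apply, if_neg hi] at this
    linarith [hB.1 i j, hC.1 i j]
  refine hB.eq_fMat fun i j hj => ?_
  have hvs : ∑ j, v j = 0 := by
    have h1 := Finset.sum_congr rfl fun j (_ : j ∈ Finset.univ) => h i j
    simp only [Finset.sum_add_distrib, ← Finset.mul_sum, hB.2, hC.2, (isRS_fMat f).2] at h1
    linarith
  have hvj := (Finset.sum_eq_zero_iff_of_nonneg fun j _ => hv0 j).1 hvs j (Finset.mem_univ j)
  have := h i j
  rw [fMat_apply, if_neg (Ne.symm hj), hvj] at this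
  linarith [hB.1 i j, hC.1 i j]

/-- `φ` sends the vertices `fMat f`, `f` nonconstant, to 0-1 matrices: the induced linear map
preserves the polytope in both directions, hence its extreme points. -/
lemma TracePair.map_fMat {n : ℕ} (hn : 2 ≤ n)
    {φ χ : Matrix (Fin n) (Fin n) ℝ → Matrix (Fin n) (Fin n) ℝ} (h : TracePair φ χ)
    {f : Fin n → Fin n} (hf : ∀ j, ∃ i, f i ≠ j) : ∃ g : Fin n → Fin n, φ (fMat f) = fMat g := by
  have hn0 : 0 < n := by omega
  have hn' : (n : ℝ) ≠ 0 := by positivity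
  obtain ⟨L, M, hLs, hL, hM, hLM⟩ := h.exists_linear hn0
  set A : {A : Matrix (Fin n) (Fin n) ℝ // IsRS A} := ⟨fMat f, isRS_fMat f⟩
  set Z : {A : Matrix (Fin n) (Fin n) ℝ // IsRS A} := ⟨φ (fMat f), h.1 _ (isRS_fMat f)⟩
  have hLA : ctr hn0 Z = L (ctr hn0 A) := hL A
  -- The preimage under `L` of a point of the polytope is a point of the polytope.
  have pull : ∀ (x : zeroSums n) (B : {A : Matrix (Fin n) (Fin n) ℝ // IsRS A}),
      ctr hn0 B = L x → ∃ B' : {A : Matrix (Fin n) (Fin n) ℝ // IsRS A}, ctr hn0 B' = x := by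
    intro x B hB
    refine exists_RS_of_trace hn0 x fun C => ?_
    rw [← hLM, ← hB, ← hM, trForm_ctr]
    have : 0 ≤ (B.1 * χ C.1).trace := by
      have h1 := B.2.mul (h.2.1 _ C.2)
      exact Finset.sum_nonneg fun i _ => h1.1 i i
    linarith
  -- A segment of row stochastic matrices centred at `Z` pulls back to one centred at `A`.
  have key : ∀ B C : {A : Matrix (Fin n) (Fin n) ℝ // IsRS A},
      (∀ i j, B.1 i j + C.1 i j = 2 * Z.1 i j) → ModR B.1 Z.1 := by
    intro B C hBC
    have hsum : ctr hn0 B + ctr hn0 C = ctr hn0 Z + ctr hn0 Z := by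
      ext i j
      have e : ∑ k, B.1 k j + ∑ k, C.1 k j = 2 * ∑ k, Z.1 k j := by
        rw [← Finset.sum_add_distrib, Finset.mul_sum, Finset.sum_congr rfl fun k _ => hBC k j]
      have e' : (∑ k, B.1 k j) / n + (∑ k, C.1 k j) / n = 2 * ((∑ k, Z.1 k j) / n) := by
        rw [← add_div, e, mul_div_assoc]
      simp only [Submodule.coe_add, Matrix.add_apply, ctr_apply]
      linarith [hBC i j]
    obtain ⟨x, hx⟩ := hLs (ctr hn0 B)
    have hC : ctr hn0 C = L (ctr hn0 A + ctr hn0 A - x) := by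
      rw [map_sub, map_add, hx, ← hLA, ← hsum]
      abel
    obtain ⟨B', hB'⟩ := pull _ B hx.symm
    obtain ⟨C', hC'⟩ := pull _ C hC
    have hsum' : ctr hn0 B' + ctr hn0 C' = ctr hn0 A + ctr hn0 A := by
      rw [hB', hC']
      abel
    have hBA : B'.1 = fMat f := by
      refine extreme_fMat hf B'.2 C'.2 (v := fun j => (∑ k, B'.1 k j) / n + (∑ k, C'.1 k j) / n
        - 2 * ((∑ k, A.1 k j) / n)) fun i j => ?_
      have h2 := congrArg (fun X : zeroSums n => X.1 i j) hsum'
      simp only [Submodule.coe_add, Matrix.add_apply, ctr_apply] at h2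
      change _ = 2 * A.1 i j + _
      linarith
    rw [ModR_iff_ctr hn0, hLA, ← hx, ← hB', show B' = A from Subtype.ext hBA]
  -- Two positive entries in a row of `Z` give such a segment, by moving mass between them.
  have uniq : ∀ i j k, 0 < Z.1 i j → 0 < Z.1 i k → j = k := by
    intro i j k hj hk
    by_contra hjk
    set ε := min (Z.1 i j) (Z.1 i k)
    have hε : 0 < ε := lt_min hj hk
    have hεj : ε ≤ Z.1 i j := min_le_left _ _
    have hεk : ε ≤ Z.1 i k := min_le_right _ _
    let E : Matrix (Fin n) (Fin n) ℝ := Matrix.single i j ε - Matrix.single i k ε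
    have hEs : ∀ a, ∑ b, E a b = 0 := by
      intro a
      by_cases ha : i = a
      · subst ha
        simp [E, Matrix.single_apply, Finset.sum_sub_distrib]
      · simp [E, ha]
    have hEb : ∀ a b, |E a b| ≤ Z.1 a b := by
      intro a b
      by_cases ha : i = a
      · subst ha
        by_cases hjb : j = b
        · subst hjb
          simp [E, Ne.symm hjk, abs_of_pos hε, hεj]
        · by_cases hkb : k = b
          · subst hkb
            simp [E, hjk, abs_of_pos hε, hεk]
          · simpa [E, Matrix.single_apply, hjb, hkb] using Z.2.1 i b
      · simpa [E, Matrix.single_apply, ha] using Z.2.1 a b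
    have h1 : IsRS (Z.1 + E) := by
      refine ⟨fun a b => ?_, fun a => ?_⟩
      · have := neg_le_of_abs_le (hEb a b)
        simp only [Matrix.add_apply]
        linarith
      · simp only [Matrix.add_apply, Finset.sum_add_distrib, Z.2.2, hEs, add_zero]
    have h2 : IsRS (Z.1 - E) := by
      refine ⟨fun a b => ?_, fun a => ?_⟩
      · have := le_of_abs_le (hEb a b)
        simp only [Matrix.sub_apply]
        linarith
      · simp only [Matrix.sub_apply, Finset.sum_sub_distrib, Z.2.2, hEs, sub_zero]
    obtain ⟨v, hv⟩ := key ⟨_, h1⟩ ⟨_, h2⟩ fun a b => by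
      simp only [Matrix.add_apply, Matrix.sub_apply]
      ring
    have : Nontrivial (Fin n) := Fin.nontrivial_iff_two_le.2 hn
    obtain ⟨i', hi'⟩ := exists_ne i
    have e1 := hv i j
    have e2 := hv i' j
    simp [E, Ne.symm hjk] at e1
    simp [E, Ne.symm hi'] at e2
    linarith
  choose g hg using Z.2.exists_pos
  refine ⟨g, Z.2.eq_fMat fun i j hj => ?_⟩
  by_contra hne
  exact hj (uniq i j (g i) (lt_of_le_of_ne (Z.2.1 i j) (Ne.symm hne)) (hg i))

/-! ### Classification of trace-preserving pairs -/

lemma U_apply {n : ℕ} (a b i j : Fin n) :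
    U a b i j = if i = a then (if b = j then 1 else 0) else (if i = j then 1 else 0) := by
  by_cases h : i = a
  · subst h
    simp [U, fMat_apply]
  · simp [U, fMat_apply, h]

lemma trace_U {n : ℕ} {a b : Fin n} (hab : a ≠ b) : (U a b).trace = n - 1 := by
  have := trace_U_mul a b 1
  rw [mul_one] at this
  rw [this]
  simp [Matrix.one_apply_ne hab.symm]

lemma trace_U_mul_U {n : ℕ} {a b c d : Fin n} (hab : a ≠ b) (hcd : c ≠ d) :
    (U a b * U c d).trace =
      n - 1 - (if a = c then 0 else 1) + (if b = c ∧ d = a then 1 else 0) := by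
  rw [trace_U_mul, trace_U hcd, U_apply, U_apply]
  by_cases h1 : a = c
  · subst h1
    simp [hab.symm, hcd.symm]
  · by_cases h2 : b = c
    · simp [h1, h2]
    · simp [h1, h2, hab.symm]

/-- A 0-1 row stochastic matrix of trace `n - 1` moves exactly one index. -/
lemma fMat_eq_U {n : ℕ} {g : Fin n → Fin n} (h : (fMat g).trace = n - 1) :
    ∃ c d, c ≠ d ∧ fMat g = U c d := by
  have h1 : ((Finset.univ.filter fun i => g i = i).card : ℝ) = n - 1 := by
    simpa [Matrix.trace, fMat_apply] using h
  have h2 := Finset.card_filter_add_card_filter_not (s := (Finset.univ : Finset (Fin n)))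
    (fun i => g i = i)
  have h3 : ((Finset.univ.filter fun i => g i = i).card : ℝ) +
      (Finset.univ.filter fun i => ¬ g i = i).card = n := by
    exact_mod_cast h2.trans (by simp)
  have h4 : (Finset.univ.filter fun i => ¬ g i = i).card = 1 := by
    have : ((Finset.univ.filter fun i => ¬ g i = i).card : ℝ) = 1 := by linarith
    exact_mod_cast this
  obtain ⟨c, hc⟩ := Finset.card_eq_one.1 h4
  have hc' : ∀ i, ¬ g i = i ↔ i = c := fun i => by
    simpa using Finset.ext_iff.1 hc i
  refine ⟨c, g c, fun h => (hc' c).2 rfl h.symm, ?_⟩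
  rw [U]
  congr 1
  ext i
  by_cases hi : i = c
  · subst hi
    simp
  · rw [Function.update_of_ne hi, id, not_not.1 (fun h => hi ((hc' i).1 h))]

lemma U_nonconst {n : ℕ} (hn : 3 ≤ n) (a b j : Fin n) : ∃ i, Function.update id a b i ≠ j := by
  obtain ⟨i, hi⟩ := Finset.exists_mem_notMem_of_card_lt_card (s := {a, j}) (t := Finset.univ)
    (lt_of_le_of_lt Finset.card_le_two (by simpa using by omega))
  simp only [Finset.mem_univ, Finset.mem_insert, Finset.mem_singleton, not_or, true_and] at hi
  exact ⟨i, by simpa [Function.update_of_ne hi.1] using hi.2⟩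

/-- `U p q + U p r - 1` is not congruent to a row stochastic matrix: for the difference `v` of the
common rows, row `p` forces `v p ≤ -1` and the other rows force `v j ≤ 0` for `j ≠ p`, whereas `v`
has sum zero. -/
lemma not_modR_U {n : ℕ} (hn : 3 ≤ n) {p q r : Fin n} (hq : p ≠ q) (hr : p ≠ r)
    {W : Matrix (Fin n) (Fin n) ℝ} (hW : IsRS W) : ¬ ModR (U p q + U p r) (1 + W) := by
  rintro ⟨v, hv⟩
  have hs : ∑ j, v j = 0 := by
    have hv' : ∀ j, U p q p j + U p r p j = (1 : Matrix (Fin n) (Fin n) ℝ) p j + W p j + v j :=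
      hv p
    have h1 := Finset.sum_congr rfl fun j (_ : j ∈ Finset.univ) => hv' j
    simp only [Finset.sum_add_distrib, hW.2, isRS_one.2] at h1
    rw [U, U, (isRS_fMat _).2, (isRS_fMat _).2] at h1
    linarith
  have hp : v p ≤ -1 := by
    have := hv p p
    simp [U_apply, hq.symm, hr.symm] at this
    linarith [hW.1 p p]
  have hj : ∀ j ∈ Finset.univ.erase p, v j ≤ 0 := by
    intro j hj
    obtain ⟨k, hk⟩ := Finset.exists_mem_notMem_of_card_lt_card (s := {p, j}) (t := Finset.univ)
      (lt_of_le_of_lt Finset.card_le_two (by simpa using by omega))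
    simp only [Finset.mem_univ, Finset.mem_insert, Finset.mem_singleton, not_or, true_and] at hk
    have := hv k j
    simp [U_apply, hk.1, hk.2] at this
    linarith [hW.1 k j]
  rw [← Finset.add_sum_erase _ _ (Finset.mem_univ p)] at hs
  linarith [Finset.sum_nonpos hj]

/-- For a normalized pair, `φ` sends the matrices `U a b` to matrices of this form, and the index
moved by `φ (U a b)` depends on `a` only, injectively: `U a b + U c d - 1` is row stochastic for
`a ≠ c`, but not even congruent to a row stochastic matrix for `a = c`. -/
lemma TracePair.map_U {n : ℕ} (hn : 3 ≤ n)
    {φ χ : Matrix (Fin n) (Fin n) ℝ → Matrix (Fin n) (Fin n) ℝ} (h : TracePair φ χ)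
    (h1 : φ 1 = 1) (h1' : χ 1 = 1) : ∃ (σ : Equiv.Perm (Fin n)) (q : Fin n → Fin n → Fin n),
      ∀ a b, a ≠ b → σ a ≠ q a b ∧ φ (U a b) = U (σ a) (q a b) := by
  have hT : ∀ a b, ∃ c d, a ≠ b → c ≠ d ∧ φ (U a b) = U c d := by
    intro a b
    by_cases hab : a = b
    · exact ⟨a, a, fun h => absurd hab h⟩
    obtain ⟨g, hg⟩ := h.map_fMat (by omega) (U_nonconst hn a b)
    have ht := h.2.2 (U a b) 1 (isRS_fMat _) isRS_one
    rw [h1', mul_one, mul_one, trace_U hab] at ht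
    change φ (U a b) = _ at hg
    rw [hg] at ht
    obtain ⟨c, d, hcd, e⟩ := fMat_eq_U ht
    exact ⟨c, d, fun _ => ⟨hcd, hg.trans e⟩⟩
  choose p q hpq using hT
  have hdisj : ∀ a b c d, a ≠ b → c ≠ d → a ≠ c → p a b ≠ p c d := by
    intro a b c d hab hcd hac hp
    have hsum : U a b + U c d = 1 + fMat (Function.update (Function.update id a b) c d) := by
      ext i j
      simp only [Matrix.add_apply, U_apply, Matrix.one_apply, fMat_apply]
      by_cases hia : i = a
      · subst hia
        simp [hac]
        ring
      · by_cases hic : i = c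
        · subst hic
          simp [hia]
        · simp [hia, hic]
    have := h.parallelogram (by omega) (isRS_fMat _) (isRS_fMat _) isRS_one (isRS_fMat _) hsum
    change ModR (φ (U a b) + φ (U c d)) _ at this
    rw [(hpq a b hab).2, (hpq c d hcd).2, h1, ← hp] at this
    refine not_modR_U hn (hpq a b hab).1 ?_ (h.1 _ (isRS_fMat _)) this
    rw [hp]
    exact (hpq c d hcd).1
  have : Nontrivial (Fin n) := Fin.nontrivial_iff_two_le.2 (by omega)
  choose t ht using fun a : Fin n => exists_ne a
  have hinj : Function.Injective fun a => p a (t a) := by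
    intro a c hac
    by_contra hne
    exact hdisj a (t a) c (t c) (ht a).symm (ht c).symm hne hac
  refine ⟨Equiv.ofBijective _ (Finite.injective_iff_bijective.1 hinj), q, fun a b hab => ?_⟩
  have hσ : p a b = p a (t a) := by
    obtain ⟨c, hc⟩ := (Finite.injective_iff_surjective.1 hinj) (p a b)
    have : c = a := by
      by_contra hca
      exact hdisj a b c (t c) hab (ht c).symm (Ne.symm hca) hc.symm
    rw [← hc, this]
  have := hpq a b hab
  rw [hσ] at this
  exact this

/-- For `n = 2` the trace determines a row stochastic matrix modulo `R_n`. For `n ≥ 3` the pairings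
of the matrices `U a b` with each other determine `χ (U a b)`, and pairing with these determines
`φ`. -/
lemma TracePair.classify_normalized {n : ℕ} (hn : 2 ≤ n)
    {φ χ : Matrix (Fin n) (Fin n) ℝ → Matrix (Fin n) (Fin n) ℝ} (h : TracePair φ χ)
    (h1 : φ 1 = 1) (h1' : χ 1 = 1) : ∃ σ : Equiv.Perm (Fin n),
      ∀ A, IsRS A → ModR (φ A) (fMat σ.symm * A * fMat σ) := by
  have htr : ∀ A, IsRS A → (φ A).trace = A.trace := by
    intro A hA
    have := h.2.2 A 1 hA isRS_one
    rwa [h1', mul_one, mul_one] at this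
  rcases hn.eq_or_lt with rfl | hn3
  · refine ⟨Equiv.refl _, fun A hA => ?_⟩
    have e : fMat (Equiv.refl (Fin 2)).symm * A * fMat (Equiv.refl (Fin 2)) = A := by
      ext i j
      rw [mul_fMat_apply, fMat_mul_apply]
      rfl
    rw [e]
    have hφ := h.1 A hA
    have e0 := htr A hA
    have e1 := hA.2
    have e2 := hφ.2
    simp only [Fin.forall_fin_two, Fin.sum_univ_two, Matrix.trace_fin_two] at e0 e1 e2
    refine ⟨fun j => φ A 0 j - A 0 j, ?_⟩
    simp only [Fin.forall_fin_two]
    refine ⟨⟨?_, ?_⟩, ?_, ?_⟩ <;> linarith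
  · obtain ⟨σ, q, hσ⟩ := h.map_U hn3 h1 h1'
    obtain ⟨σ', q', hσ'⟩ := h.symm.map_U hn3 h1' h1
    have htrU : ∀ a b c d, a ≠ b → c ≠ d →
        (U (σ a) (q a b) * U (σ' c) (q' c d)).trace = (U a b * U c d).trace := by
      intro a b c d hab hcd
      rw [← (hσ a b hab).2, ← (hσ' c d hcd).2]
      exact h.2.2 _ _ (isRS_fMat _) (isRS_fMat _)
    -- For `x ∉ {a, b}` the product of `U a b` and `U b x` has trace `n - 2`, while a common moved
    -- index would make the trace at least `n - 1`.
    have hne : ∀ a b, a ≠ b → σ a ≠ σ' b := by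
      intro a b hab heq
      obtain ⟨x, hx⟩ := Finset.exists_mem_notMem_of_card_lt_card (s := {a, b})
        (t := Finset.univ) (lt_of_le_of_lt Finset.card_le_two (by simpa using by omega))
      simp only [Finset.mem_univ, Finset.mem_insert, Finset.mem_singleton, not_or,
        true_and] at hx
      have := htrU a b b x hab (Ne.symm hx.2)
      have t1 : (U a b * U b x).trace = n - 1 - 1 + 0 := by
        rw [trace_U_mul_U hab (Ne.symm hx.2), if_neg hab, if_neg fun h => hx.1 h.2]
      rw [t1, trace_U_mul_U (hσ a b hab).1 (hσ' b x (Ne.symm hx.2)).1, if_pos heq] at this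
      split_ifs at this <;> linarith
    have hσσ : ∀ a, σ' a = σ a := by
      intro a
      obtain ⟨c, hc⟩ := σ'.surjective (σ a)
      have : a = c := by
        by_contra hac
        exact hne a c hac hc.symm
      rw [this] at hc ⊢
      exact hc
    have hq : ∀ a b, a ≠ b → χ (U a b) = U (σ a) (σ b) := by
      intro a b hab
      have := htrU b a a b hab.symm hab
      have t1 : (U b a * U a b).trace = n - 1 - 1 + 1 := by
        rw [trace_U_mul_U hab.symm hab, if_neg hab.symm, if_pos ⟨rfl, rfl⟩]
      rw [t1, trace_U_mul_U (hσ b a hab.symm).1 (hσ' a b hab).1, if_neg (hne b a hab.symm)] at this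
      have h3 : q b a = σ' a ∧ q' a b = σ b := by
        by_contra hcon
        rw [if_neg hcon] at this
        linarith
      rw [(hσ' a b hab).2, hσσ, h3.2]
    refine ⟨σ, fun A hA => ?_⟩
    -- `φ A`, reindexed along `σ`, pairs with every `U a b` as `A` does.
    have hX : ModR (Matrix.of fun i j => φ A (σ i) (σ j)) A := by
      have e : (Matrix.of fun i j => φ A (σ i) (σ j)).trace = (φ A).trace :=
        Equiv.sum_comp σ fun i => φ A i i
      refine modR_of_trace (e.trans (htr A hA)) fun a b hab => ?_
      have h4 := h.2.2 A (U a b) hA (isRS_fMat _)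
      rw [hq a b hab, Matrix.trace_mul_comm, Matrix.trace_mul_comm A] at h4
      rw [← h4, trace_U_mul, trace_U_mul, e]
      rfl
    obtain ⟨v, hv⟩ := hX
    refine ⟨fun j => v (σ.symm j), fun i j => ?_⟩
    have := hv (σ.symm i) (σ.symm j)
    simpa [mul_fMat_apply, fMat_mul_apply] using this

/-- Up to constant rows, each member of a trace-preserving pair is `A ↦ P A Q` with permutation
matrices `P` and `Q`. -/
lemma TracePair.classify {n : ℕ} (hn : 2 ≤ n)
    {φ χ : Matrix (Fin n) (Fin n) ℝ → Matrix (Fin n) (Fin n) ℝ} (h : TracePair φ χ) :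
    ∃ σ τ : Equiv.Perm (Fin n), ∀ A, IsRS A → ModR (φ A) (fMat σ * A * fMat τ.symm) := by
  have h0 := h.2.2 1 1 isRS_one isRS_one
  obtain ⟨ρ, hρ, hρ'⟩ := perm_of_trace (h.1 _ isRS_one) (h.2.1 _ isRS_one)
    (by rw [h0]; simp)
  have h' : TracePair (fun A => fMat ρ.symm * φ A) (fun A => χ A * fMat ρ) := by
    refine ⟨fun A hA => (isRS_fMat _).mul (h.1 _ hA), fun A hA => (h.2.1 _ hA).mul (isRS_fMat _),
      fun A B hA hB => ?_⟩
    rw [← h.2.2 A B hA hB, Matrix.mul_assoc, Matrix.trace_mul_comm]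
    simp only [Matrix.mul_assoc, fMat_mul_symm, mul_one]
  obtain ⟨σ, hσ⟩ := h'.classify_normalized hn (by simp only [hρ, fMat_symm_mul])
    (by simp only [hρ', fMat_symm_mul])
  refine ⟨ρ.trans σ.symm, σ.symm, fun A hA => ?_⟩
  have h2 := (hσ A hA).mul_left (isRS_fMat ρ)
  rw [← Matrix.mul_assoc, fMat_mul_symm, one_mul] at h2
  convert h2 using 1
  ext i j
  simp [mul_fMat_apply, fMat_mul_apply]

lemma fMat_mul_symm_cancel {n : ℕ} (σ : Equiv.Perm (Fin n)) (X : Matrix (Fin n) (Fin n) ℝ) :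
    fMat σ * (fMat σ.symm * X) = X := by
  rw [← Matrix.mul_assoc, fMat_mul_symm, one_mul]

/-! ### Products of several factors -/

/-- If `φ₁(A₁) ⋯ φ_m(A_m)` is congruent to `A₁ ⋯ A_m` up to outer permutations, the factors can be
peeled off from the left: with all variables equal to `1`, the first factor and the rest multiply to
a matrix of trace `n`, hence are mutually inverse permutation matrices by `perm_of_trace`. -/
lemma chain {n : ℕ} (hn : 0 < n) : ∀ (k : ℕ)
    (φ : Fin (k + 1) → Matrix (Fin n) (Fin n) ℝ → Matrix (Fin n) (Fin n) ℝ)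
    (_ : ∀ i A, IsRS A → IsRS (φ i A)) (σ τ : Equiv.Perm (Fin n))
    (_ : ∀ A : Fin (k + 1) → Matrix (Fin n) (Fin n) ℝ, (∀ i, IsRS (A i)) →
      ModR (fMat σ.symm * (List.ofFn fun i => φ i (A i)).prod * fMat τ) (List.ofFn A).prod),
    ∃ π : ℕ → Equiv.Perm (Fin n), π 0 = σ ∧ π (k + 1) = τ ∧ ∀ (i : Fin (k + 1)) A, IsRS A →
      ModR (φ i A) (fMat (π i.val) * A * fMat (π (i.val + 1)).symm)
  | 0, φ, hφ, σ, τ, h => by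
    refine ⟨fun i => if i = 0 then σ else τ, by simp, by simp, fun i A hA => ?_⟩
    have h1 := h (fun _ => A) fun _ => hA
    simp only [List.ofFn_succ, List.ofFn_zero, List.prod_cons, List.prod_nil, mul_one] at h1
    have h2 := (h1.mul_left (isRS_fMat σ)).mul_right (fMat τ.symm)
    have e : fMat σ * (fMat σ.symm * φ 0 A * fMat τ) * fMat τ.symm = φ 0 A := by
      simp only [Matrix.mul_assoc, fMat_mul_symm, mul_one, fMat_mul_symm_cancel]
    rw [e] at h2
    have hi : i = 0 := Fin.fin_one_eq_zero i
    subst hi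
    simpa using h2
  | k + 1, φ, hφ, σ, τ, h => by
    have hcons : ∀ A (B : Fin (k + 1) → Matrix (Fin n) (Fin n) ℝ), IsRS A → (∀ i, IsRS (B i)) →
        ModR (fMat σ.symm * (φ 0 A * (List.ofFn fun i => φ i.succ (B i)).prod) * fMat τ)
          (A * (List.ofFn B).prod) := by
      intro A B hA hB
      have := h (Fin.cons A B) fun i => by
        refine Fin.cases ?_ (fun i => ?_) i
        · simpa using hA
        · simpa using hB i
      simpa only [List.ofFn_succ, List.prod_cons, Fin.cons_zero, Fin.cons_succ] using this
    have hφs : ∀ (i : Fin (k + 1)) A, IsRS A → IsRS (φ i.succ A) := fun i => hφ i.succ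
    set Z := (List.ofFn fun i : Fin (k + 1) => φ i.succ 1).prod * fMat τ
    have hZ : IsRS Z := (isRS_prod _ fun i => hφs i 1 isRS_one).mul (isRS_fMat _)
    have hone : (List.ofFn fun _ : Fin (k + 1) => (1 : Matrix (Fin n) (Fin n) ℝ)).prod = 1 := by
      simp [List.ofFn_const]
    have hAZ : ∀ A, IsRS A → ModR (fMat σ.symm * φ 0 A * Z) A := by
      intro A hA
      have := hcons A (fun _ => 1) hA fun _ => isRS_one
      rw [hone, mul_one] at this
      simpa only [Z, Matrix.mul_assoc] using this
    have hL : IsRS (fMat σ.symm * φ 0 1) := (isRS_fMat _).mul (hφ 0 1 isRS_one)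
    obtain ⟨ρ, hρ, hρZ⟩ := perm_of_trace hL hZ (by
      rw [(hAZ 1 isRS_one).trace_eq hn (hL.mul hZ) isRS_one]
      simp)
    have h0 : ∀ A, IsRS A → ModR (φ 0 A) (fMat σ * A * fMat ρ) := by
      intro A hA
      have h2 := ((hAZ A hA).mul_left (isRS_fMat σ)).mul_right (fMat ρ)
      have e : fMat σ * (fMat σ.symm * φ 0 A * Z) * fMat ρ = φ 0 A := by
        simp only [hρZ, Matrix.mul_assoc, fMat_symm_mul, mul_one, fMat_mul_symm_cancel]
      rwa [e] at h2
    obtain ⟨π, hπ0, hπ1, hπ⟩ := chain hn k (fun i => φ i.succ) hφs ρ.symm τ (by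
      intro B hB
      have h3 := hcons 1 B isRS_one hB
      rw [one_mul, ← Matrix.mul_assoc (fMat σ.symm), hρ] at h3
      simpa using h3)
    refine ⟨fun i => Nat.casesOn i σ π, rfl, hπ1, fun i A hA => ?_⟩
    refine Fin.cases ?_ (fun i => ?_) i
    · simpa [hπ0] using h0 A hA
    · simpa using hπ i A hA

lemma prod_modR {n : ℕ} : ∀ (m : ℕ)
    (φ : Fin m → Matrix (Fin n) (Fin n) ℝ → Matrix (Fin n) (Fin n) ℝ)
    (_ : ∀ i A, IsRS A → IsRS (φ i A)) (π : ℕ → Equiv.Perm (Fin n))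
    (_ : ∀ (i : Fin m) A, IsRS A →
      ModR (φ i A) (fMat (π i.val) * A * fMat (π (i.val + 1)).symm))
    (A : Fin m → Matrix (Fin n) (Fin n) ℝ) (_ : ∀ i, IsRS (A i)),
    ModR (List.ofFn fun i => φ i (A i)).prod
      (fMat (π 0) * (List.ofFn A).prod * fMat (π m).symm)
  | 0, φ, hφ, π, h, A, hA => ⟨0, by simp [fMat_mul_symm]⟩
  | m + 1, φ, hφ, π, h, A, hA => by
    have ih := prod_modR m (fun i => φ i.succ) (fun i => hφ i.succ) (fun i => π (i + 1))
      (fun i A hA => by simpa using h i.succ A hA) (fun i => A i.succ) fun i => hA i.succ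
    have h1 := ih.mul_left (hφ 0 _ (hA 0))
    have h2 := (h 0 _ (hA 0)).mul_right
      (fMat (π (0 + 1)) * (List.ofFn fun i => A i.succ).prod * fMat (π (m + 1)).symm)
    have h3 := h1.trans h2
    rw [List.ofFn_succ, List.prod_cons, List.ofFn_succ, List.prod_cons]
    convert h3 using 1
    have e : fMat (π (0 + 1)).symm * (fMat (π (0 + 1)) * ((List.ofFn fun i => A i.succ).prod *
        fMat (π (m + 1)).symm)) = (List.ofFn fun i => A i.succ).prod * fMat (π (m + 1)).symm := by
      rw [← Matrix.mul_assoc, fMat_symm_mul, one_mul]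
    simp only [Matrix.mul_assoc] at e ⊢
    simp only [Fin.val_zero, e]

/-- Adding `e vᵀ` with `vᵀ e = 0` to a row stochastic `Y` keeps the characteristic polynomial: as
`e` is an eigenvector of `Y`, for real `x ≠ 1` one has
`x - Y - e vᵀ = (x - Y) (1 - (x - 1)⁻¹ e vᵀ)`, and the last factor has determinant one. -/
lemma ModR.charpoly_eq {n : ℕ} (hn : 0 < n) {X Y : Matrix (Fin n) (Fin n) ℝ} (h : ModR X Y)
    (hX : IsRS X) (hY : IsRS Y) : X.charpoly = Y.charpoly := by
  obtain ⟨v, hv⟩ := h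
  have hvs : ∑ j, v j = 0 := by
    have h1 := hX.2 ⟨0, hn⟩
    simp only [hv, Finset.sum_add_distrib, hY.2] at h1
    linarith
  refine Polynomial.eq_of_infinite_eval_eq _ _ ?_
  refine Set.Infinite.mono (s := {1}ᶜ) (fun x hx => ?_) (Set.finite_singleton 1).infinite_compl
  have hx1 : x - 1 ≠ 0 := sub_ne_zero.2 hx
  let u : Matrix (Fin n) Unit ℝ := Matrix.replicateCol Unit fun _ => 1
  let w : Matrix Unit (Fin n) ℝ := Matrix.replicateRow Unit fun j => -(x - 1)⁻¹ * v j
  have e1 : (Matrix.scalar (Fin n) x - Y) * u = Matrix.replicateCol Unit fun _ => x - 1 := by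
    ext i j
    simp [u, Matrix.mul_apply, Finset.sum_sub_distrib, hY.2, Matrix.diagonal_apply]
  have e : Matrix.scalar (Fin n) x - X = (Matrix.scalar (Fin n) x - Y) * (1 + u * w) := by
    rw [Matrix.mul_add, Matrix.mul_one, ← Matrix.mul_assoc, e1]
    ext i j
    simp [w, Matrix.mul_apply, hv]
    field_simp
    ring
  rw [Set.mem_ofPred_eq, Matrix.eval_charpoly, Matrix.eval_charpoly, e, Matrix.det_mul,
    Matrix.det_one_add_replicateCol_mul_replicateRow]
  simp [dotProduct, ← Finset.mul_sum, hvs]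

lemma charpoly_conj {n : ℕ} (σ : Equiv.Perm (Fin n)) (A : Matrix (Fin n) (Fin n) ℝ) :
    (fMat σ * A * fMat σ.symm).charpoly = A.charpoly := by
  rw [Matrix.mul_assoc, Matrix.charpoly_mul_comm, Matrix.mul_assoc, fMat_symm_mul, mul_one]

lemma partDS_apply {n : ℕ} (hn : 0 < n) {A : Matrix (Fin n) (Fin n) ℝ} (hA : IsRS A)
    (i j : Fin n) : partDS A i j = A i j - rVec A j := by
  have hn' : (n : ℝ) ≠ 0 := by positivity
  simp only [partDS, partR, partC, Matrix.sub_apply, Matrix.vecMulVec_apply, cVec, sAvg, hA.2]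
  simp
  field_simp
  ring

lemma sum_rVec {n : ℕ} (hn : 0 < n) {A : Matrix (Fin n) (Fin n) ℝ} (hA : IsRS A) :
    ∑ j, rVec A j = 0 := by
  have hn' : (n : ℝ) ≠ 0 := by positivity
  simp only [rVec, sAvg, Finset.sum_sub_distrib, hA.2, ← Finset.sum_div]
  rw [Finset.sum_comm]
  simp [hA.2]
  field_simp
  ring

lemma conj_apply {n : ℕ} (σ τ : Equiv.Perm (Fin n)) (M : Matrix (Fin n) (Fin n) ℝ)
    (i j : Fin n) : (fMat σ * M * fMat τ.symm) i j = M (σ i) (τ j) := by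
  rw [mul_fMat_apply, fMat_mul_apply, Equiv.symm_symm]

/-- The part `A_R` is invisible modulo `R_n`. -/
lemma inRn_iff {n : ℕ} (hn : 0 < n) {A X : Matrix (Fin n) (Fin n) ℝ} (hA : IsRS A) (hX : IsRS X)
    (σ τ : Equiv.Perm (Fin n)) : InRn (X - fMat σ * partDS A * (fMat τ)ᵀ) ↔
      ModR X (fMat σ * A * fMat τ.symm) := by
  rw [fMat_transpose]
  have hr : ∑ j, rVec A (τ j) = 0 := (Equiv.sum_comp τ (rVec A)).trans (sum_rVec hn hA)
  constructor
  · rintro ⟨v, -, hv⟩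
    refine ⟨fun j => v j - rVec A (τ j), fun i j => ?_⟩
    have := congrFun (congrFun hv i) j
    rw [Matrix.sub_apply, conj_apply, partDS_apply hn hA, Matrix.vecMulVec_apply] at this
    rw [conj_apply]
    linarith
  · rintro ⟨v, hv⟩
    have hvs : ∑ j, v j = 0 := by
      have hs := hX.2 ⟨0, hn⟩
      simp only [hv, Finset.sum_add_distrib,
        (((isRS_fMat σ).mul hA).mul (isRS_fMat τ.symm)).2] at hs
      linarith
    refine ⟨fun j => v j + rVec A (τ j), ?_, ?_⟩
    · rw [Finset.sum_add_distrib, hvs, hr, add_zero]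
    · ext i j
      rw [Matrix.sub_apply, conj_apply, partDS_apply hn hA, Matrix.vecMulVec_apply, hv,
        conj_apply]
      ring

/-- The maps `φ₁` and `φ₂(·) φ₃(1) ⋯ φ_m(1)` form a trace-preserving pair, which determines `φ₁`;
testing against `1` and the matrices `U a b` then determines `φ₂(A₂) ⋯ φ_m(A_m)` modulo `R_n`, so
that `chain` applies to it. -/
lemma exists_perm_of_trace {n : ℕ} (hn : 2 ≤ n) (k : ℕ)
    (φ : Fin (k + 2) → Matrix (Fin n) (Fin n) ℝ → Matrix (Fin n) (Fin n) ℝ)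
    (hφ : ∀ i A, IsRS A → IsRS (φ i A))
    (h : ∀ A : Fin (k + 2) → Matrix (Fin n) (Fin n) ℝ, (∀ i, IsRS (A i)) →
      ((List.ofFn fun i => φ i (A i)).prod).trace = ((List.ofFn A).prod).trace) :
    ∃ π : ℕ → Equiv.Perm (Fin n), π (k + 2) = π 0 ∧ ∀ (i : Fin (k + 2)) A, IsRS A →
      ModR (φ i A) (fMat (π i.val) * A * fMat (π (i.val + 1)).symm) := by
  have hn0 : 0 < n := by omega
  have hcons : ∀ A (B : Fin (k + 1) → Matrix (Fin n) (Fin n) ℝ), IsRS A → (∀ i, IsRS (B i)) →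
      (φ 0 A * (List.ofFn fun i => φ i.succ (B i)).prod).trace =
        (A * (List.ofFn B).prod).trace := by
    intro A B hA hB
    have := h (Fin.cons A B) fun i => by
      refine Fin.cases ?_ (fun i => ?_) i
      · simpa using hA
      · simpa using hB i
    simpa only [List.ofFn_succ, List.prod_cons, Fin.cons_zero, Fin.cons_succ] using this
  have hone : (List.ofFn fun _ : Fin k => (1 : Matrix (Fin n) (Fin n) ℝ)).prod = 1 := by
    simp [List.ofFn_const]
  have hpair : TracePair (φ 0)
      (fun B => φ 1 B * (List.ofFn fun i : Fin k => φ i.succ.succ 1).prod) := by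
    refine ⟨hφ 0, fun B hB => (hφ 1 B hB).mul (isRS_prod _ fun i => hφ _ 1 isRS_one),
      fun A B hA hB => ?_⟩
    have h1 := hcons A (Fin.cons B fun _ => 1) hA fun i => by
      refine Fin.cases ?_ (fun i => ?_) i
      · simpa using hB
      · simpa using isRS_one
    rw [List.ofFn_succ, List.prod_cons, List.ofFn_succ, List.prod_cons] at h1
    simpa only [Fin.cons_zero, Fin.cons_succ, hone, mul_one, Fin.succ_zero_eq_one] using h1
  obtain ⟨σ, τ, hστ⟩ := hpair.classify hn
  obtain ⟨π, hπ0, hπ1, hπ⟩ := chain hn0 k (fun i => φ i.succ) (fun i => hφ i.succ) τ σ (by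
    intro B hB
    set R := (List.ofFn fun i => φ i.succ (B i)).prod
    have hR : IsRS R := isRS_prod _ fun i => hφ _ _ (hB i)
    have key : ∀ A, IsRS A →
        (A * (fMat τ.symm * R * fMat σ)).trace = (A * (List.ofFn B).prod).trace := by
      intro A hA
      rw [← hcons A B hA hB, ((hστ A hA).mul_right R).trace_eq hn0 ((hφ 0 A hA).mul hR)
        ((((isRS_fMat σ).mul hA).mul (isRS_fMat _)).mul hR), ← Matrix.mul_assoc,
        Matrix.trace_mul_comm _ (fMat σ)]
      simp only [Matrix.mul_assoc]
    exact modR_of_trace (by simpa using key 1 isRS_one)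
      fun a b _ => key _ (isRS_fMat _))
  refine ⟨fun i => Nat.casesOn i σ π, hπ1, fun i A hA => ?_⟩
  refine Fin.cases ?_ (fun i => ?_) i
  · simpa [hπ0] using hστ A hA
  · simpa using hπ i A hA

/-! ### Linear maps -/

/-- A linear map inducing the identity modulo `R_n` on row stochastic matrices fixes every 0-1
matrix of a nonconstant map. -/
lemma map_fMat_of_modR {n : ℕ}
    {ψ : Matrix (Fin n) (Fin n) ℝ →ₗ[ℝ] Matrix (Fin n) (Fin n) ℝ}
    (hψ : ∀ A, IsRS A → IsRS (ψ A)) (h : ∀ A, IsRS A → ModR (ψ A) A)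
    {f : Fin n → Fin n} (hf : ∀ j, ∃ i, f i ≠ j) : ψ (fMat f) = fMat f := by
  obtain ⟨v, hv⟩ := h _ (isRS_fMat f)
  exact extreme_fMat hf (hψ _ (isRS_fMat f)) (hψ _ (isRS_fMat f)) (v := fun j => 2 * v j)
    fun i j => by rw [hv]; ring

/-- A row stochastic matrix, expanded in the 0-1 matrices of maps that differ from a constant map
in at most one place. -/
lemma IsRS.expand {n : ℕ} {A : Matrix (Fin n) (Fin n) ℝ} (hA : IsRS A) (c : Fin n) :
    A = fMat (fun _ => c) + ∑ i, ∑ j, A i j •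
      (fMat (Function.update (fun _ => c) i j) - fMat fun _ => c) := by
  ext p q
  simp only [Matrix.add_apply, Matrix.sum_apply, Matrix.smul_apply, Matrix.sub_apply, fMat_apply,
    smul_eq_mul]
  rw [Finset.sum_eq_single p]
  · simp only [Function.update_self, mul_sub, Finset.sum_sub_distrib, ← Finset.sum_mul, hA.2]
    simp
  · intro i _ hi
    simp [Function.update_of_ne hi.symm]
  · simp

/-- For `n ≥ 3` the 0-1 matrices of nonconstant maps already span: the matrix
of a constant map is `fMat f + fMat g - fMat h`, where `f` and `g` change its value in one row each
and `h` changes it in both rows. -/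
lemma eq_self_of_modR {n : ℕ} (hn : 3 ≤ n)
    {ψ : Matrix (Fin n) (Fin n) ℝ →ₗ[ℝ] Matrix (Fin n) (Fin n) ℝ}
    (hψ : ∀ A, IsRS A → IsRS (ψ A)) (h : ∀ A, IsRS A → ModR (ψ A) A)
    {A : Matrix (Fin n) (Fin n) ℝ} (hA : IsRS A) : ψ A = A := by
  let c : Fin n := ⟨0, by omega⟩
  let d : Fin n := ⟨1, by omega⟩
  let p : Fin n := ⟨2, by omega⟩
  have hcd : c ≠ d := by simp [c, d]
  have hcp : p ≠ c := by simp [c, p]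
  have hdp : p ≠ d := by simp [d, p]
  have hfix : ∀ f : Fin n → Fin n, (∃ i i', f i ≠ f i') → ψ (fMat f) = fMat f := by
    rintro f ⟨i, i', hi⟩
    refine map_fMat_of_modR hψ h fun j => ?_
    by_cases hj : f i = j
    · exact ⟨i', fun h => hi (hj.trans h.symm)⟩
    · exact ⟨i, hj⟩
  have hc : ψ (fMat fun _ => c) = fMat fun _ => c := by
    have e : fMat (fun _ => c) = fMat (Function.update (fun _ => c) c d) +
        fMat (Function.update (fun _ => c) d d) -
        fMat (Function.update (Function.update (fun _ => c) c d) d d) := by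
      ext i j
      simp only [Matrix.sub_apply, Matrix.add_apply, fMat_apply]
      by_cases h1 : i = d
      · subst h1
        simp [Function.update_of_ne hcd.symm]
      · by_cases h2 : i = c
        · subst h2
          simp [Function.update_of_ne hcd]
        · simp [Function.update_of_ne h1, Function.update_of_ne h2]
    rw [e, map_sub, map_add, hfix, hfix, hfix]
    · exact ⟨d, p, by simpa [Function.update_of_ne hdp, Function.update_of_ne hcp] using hcd.symm⟩
    · exact ⟨d, p, by simpa [Function.update_of_ne hdp] using hcd.symm⟩
    · exact ⟨c, p, by simpa [Function.update_of_ne hcp] using hcd.symm⟩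
  have hu : ∀ i j, ψ (fMat (Function.update (fun _ => c) i j)) =
      fMat (Function.update (fun _ => c) i j) := by
    intro i j
    by_cases hj : j = c
    · rw [hj, show Function.update (fun _ => c) i c = fun _ => c from
        Function.update_eq_self i fun _ => c]
      exact hc
    · have : ∃ i', i' ≠ i := by
        by_cases hi : i = c
        · exact ⟨p, hi ▸ hcp⟩
        · exact ⟨c, Ne.symm hi⟩
      obtain ⟨i', hi'⟩ := this
      exact hfix _ ⟨i, i', by simpa [Function.update_of_ne hi'] using hj⟩
  conv_lhs => rw [hA.expand c]
  conv_rhs => rw [hA.expand c]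
  simp only [map_add, map_sum, map_smul, map_sub, hc, hu]

/-- For `n = 2` the identity and the transposition are fixed, and the image of the constant matrix
`e e₁ᵀ` is the only freedom. -/
lemma exists_of_modR_two {ψ : Matrix (Fin 2) (Fin 2) ℝ →ₗ[ℝ] Matrix (Fin 2) (Fin 2) ℝ}
    (hψ : ∀ A, IsRS A → IsRS (ψ A)) (h : ∀ A, IsRS A → ModR (ψ A) A) :
    ∃ c : ℝ, c ∈ Set.Icc (-1 : ℝ) 1 ∧ ∀ A, IsRS A → ψ A = partDS A + c • partR A := by
  have h1 : ψ (fMat ![0, 1]) = fMat ![0, 1] := map_fMat_of_modR hψ h (by decide)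
  have h2 : ψ (fMat ![1, 0]) = fMat ![1, 0] := map_fMat_of_modR hψ h (by decide)
  have hT := hψ _ (isRS_fMat fun _ => 0)
  obtain ⟨v, hv⟩ := h _ (isRS_fMat fun _ => 0)
  set T := ψ (fMat fun _ => 0)
  have t0 : T 1 0 = T 0 0 := by rw [hv, hv]; simp [fMat_apply]
  have t1 : T 1 1 = T 0 1 := by rw [hv, hv]; simp [fMat_apply]
  have hs : T 0 1 = 1 - T 0 0 := by
    have := hT.2 0
    rw [Fin.sum_univ_two] at this
    linarith
  refine ⟨2 * T 0 0 - 1, ⟨by linarith [hT.1 0 0], by linarith [hT.le_one 0 0]⟩, fun A hA => ?_⟩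
  have a0 : A 0 1 = 1 - A 0 0 := by
    have := hA.2 0
    rw [Fin.sum_univ_two] at this
    linarith
  have a1 : A 1 1 = 1 - A 1 0 := by
    have := hA.2 1
    rw [Fin.sum_univ_two] at this
    linarith
  have e : A = (1 - A 1 0) • fMat ![0, 1] + (1 - A 0 0) • fMat ![1, 0] +
      (A 0 0 + A 1 0 - 1) • fMat fun _ => 0 := by
    ext i j
    fin_cases i <;> fin_cases j <;> simp [fMat_apply, a0, a1]
  have e' : ψ A = (1 - A 1 0) • fMat ![0, 1] + (1 - A 0 0) • fMat ![1, 0] +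
      (A 0 0 + A 1 0 - 1) • T := by
    conv_lhs => rw [e]
    simp only [map_add, map_smul, h1, h2, T]
  rw [e']
  ext i j
  simp only [Matrix.add_apply, Matrix.smul_apply, partDS_apply two_pos hA, partR, vecMulVec_apply]
  fin_cases i <;> fin_cases j <;>
    simp [fMat_apply, rVec, sAvg, Fin.sum_univ_two, a0, a1, t0, t1, hs] <;> ring

/-- The map `A ↦ P⁻¹ L(A) Q` for permutation matrices `P` and `Q`. -/
def untwist {n : ℕ} (σ τ : Equiv.Perm (Fin n))
    (L : Matrix (Fin n) (Fin n) ℝ →ₗ[ℝ] Matrix (Fin n) (Fin n) ℝ) :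
    Matrix (Fin n) (Fin n) ℝ →ₗ[ℝ] Matrix (Fin n) (Fin n) ℝ where
  toFun A := fMat σ.symm * L A * fMat τ
  map_add' A B := by rw [map_add, mul_add, add_mul]
  map_smul' c A := by simp

lemma untwist_apply {n : ℕ} (σ τ : Equiv.Perm (Fin n))
    (L : Matrix (Fin n) (Fin n) ℝ →ₗ[ℝ] Matrix (Fin n) (Fin n) ℝ) (A : Matrix (Fin n) (Fin n) ℝ) :
    untwist σ τ L A = fMat σ.symm * L A * fMat τ := rfl

lemma eq_twist {n : ℕ} (σ τ : Equiv.Perm (Fin n)) {X Y : Matrix (Fin n) (Fin n) ℝ}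
    (h : fMat σ.symm * X * fMat τ = Y) : X = fMat σ * Y * fMat τ.symm := by
  simp only [← h, Matrix.mul_assoc, fMat_mul_symm, mul_one, fMat_mul_symm_cancel]

lemma untwist_modR {n : ℕ} {σ τ : Equiv.Perm (Fin n)}
    {L : Matrix (Fin n) (Fin n) ℝ →ₗ[ℝ] Matrix (Fin n) (Fin n) ℝ} {A : Matrix (Fin n) (Fin n) ℝ}
    (h : ModR (L A) (fMat σ * A * fMat τ.symm)) : ModR (untwist σ τ L A) A := by
  have h1 := (h.mul_left (isRS_fMat σ.symm)).mul_right (fMat τ)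
  have e : fMat σ.symm * (fMat σ * A * fMat τ.symm) * fMat τ = A := by
    simp only [Matrix.mul_assoc, fMat_symm_mul, mul_one]
    rw [← Matrix.mul_assoc, fMat_symm_mul, one_mul]
  rwa [e] at h1

/-! ### The equivalence and the linear case -/

theorem stmt19 (n m : ℕ) (hn : 2 ≤ n) (hm : 2 ≤ m)
    (φ : Fin m → Matrix (Fin n) (Fin n) ℝ → Matrix (Fin n) (Fin n) ℝ)
    (hφ : ∀ i A, IsRS A → IsRS (φ i A)) :
    ((∀ A : Fin m → Matrix (Fin n) (Fin n) ℝ, (∀ i, IsRS (A i)) →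
        ((List.ofFn fun i => φ i (A i)).prod).trace = ((List.ofFn A).prod).trace) ↔
      (∀ A : Fin m → Matrix (Fin n) (Fin n) ℝ, (∀ i, IsRS (A i)) →
        ((List.ofFn fun i => φ i (A i)).prod).charpoly = ((List.ofFn A).prod).charpoly)) ∧
    ((∀ A : Fin m → Matrix (Fin n) (Fin n) ℝ, (∀ i, IsRS (A i)) →
        ((List.ofFn fun i => φ i (A i)).prod).trace = ((List.ofFn A).prod).trace) ↔
      (∃ P : ℕ → Matrix (Fin n) (Fin n) ℝ, (∀ i, i ≤ m → IsPerm (P i)) ∧ P m = P 0 ∧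
        ∀ i : Fin m, ∀ A, IsRS A →
          InRn (φ i A - P i.val * partDS A * (P (i.val + 1))ᵀ))) ∧
    ((∀ A : Fin m → Matrix (Fin n) (Fin n) ℝ, (∀ i, IsRS (A i)) →
        ((List.ofFn fun i => φ i (A i)).prod).trace = ((List.ofFn A).prod).trace) →
      ∀ ℓ : Fin m,
        (∃ L : Matrix (Fin n) (Fin n) ℝ →ₗ[ℝ] Matrix (Fin n) (Fin n) ℝ,
          ∀ A, IsRS A → φ ℓ A = L A) →
        ∀ P : ℕ → Matrix (Fin n) (Fin n) ℝ,
          ((∀ i, i ≤ m → IsPerm (P i)) ∧ P m = P 0 ∧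
            ∀ i : Fin m, ∀ A, IsRS A →
              InRn (φ i A - P i.val * partDS A * (P (i.val + 1))ᵀ)) →
          ((n = 2 → ∃ c : ℝ, c ∈ Set.Icc (-1 : ℝ) 1 ∧
              ∀ A, IsRS A →
                φ ℓ A = P ℓ.val * partDS A * (P (ℓ.val + 1))ᵀ +
                  c • (partR A * (P (ℓ.val + 1))ᵀ)) ∧
           (3 ≤ n → ∀ A, IsRS A → φ ℓ A = P ℓ.val * A * (P (ℓ.val + 1))ᵀ))) := by
  have hn0 : 0 < n := by omega
  have : Nonempty (Fin n) := ⟨⟨0, hn0⟩⟩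
  -- The cycle (1) → (3) → (2) → (1).
  have h13 : (∀ A : Fin m → Matrix (Fin n) (Fin n) ℝ, (∀ i, IsRS (A i)) →
        ((List.ofFn fun i => φ i (A i)).prod).trace = ((List.ofFn A).prod).trace) →
      (∃ P : ℕ → Matrix (Fin n) (Fin n) ℝ, (∀ i, i ≤ m → IsPerm (P i)) ∧ P m = P 0 ∧
        ∀ i : Fin m, ∀ A, IsRS A →
          InRn (φ i A - P i.val * partDS A * (P (i.val + 1))ᵀ)) := by
    intro h
    obtain ⟨k, rfl⟩ : ∃ k, m = k + 2 := ⟨m - 2, by omega⟩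
    obtain ⟨π, hπ, hπ'⟩ := exists_perm_of_trace hn k φ hφ h
    exact ⟨fun i => fMat (π i), fun i _ => (isPerm_iff _).2 ⟨_, rfl⟩, by simp only [hπ],
      fun i A hA => (inRn_iff hn0 hA (hφ i A hA) _ _).2 (hπ' i A hA)⟩
  have hP : ∀ P : ℕ → Matrix (Fin n) (Fin n) ℝ, ((∀ i, i ≤ m → IsPerm (P i)) ∧ P m = P 0 ∧
      ∀ i : Fin m, ∀ A, IsRS A → InRn (φ i A - P i.val * partDS A * (P (i.val + 1))ᵀ)) →
      ∃ π : ℕ → Equiv.Perm (Fin n), (∀ i, i ≤ m → P i = fMat (π i)) ∧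
        ∀ (i : Fin m) A, IsRS A →
          ModR (φ i A) (fMat (π i.val) * A * fMat (π (i.val + 1)).symm) := by
    rintro P ⟨h1, -, h3⟩
    have : ∀ i, ∃ σ : Equiv.Perm (Fin n), i ≤ m → P i = fMat σ := fun i => by
      by_cases hi : i ≤ m
      · obtain ⟨σ, hσ⟩ := (isPerm_iff _).1 (h1 i hi)
        exact ⟨σ, fun _ => hσ⟩
      · exact ⟨1, fun h => absurd h hi⟩
    choose π hπ using this
    refine ⟨π, hπ, fun i A hA => (inRn_iff hn0 hA (hφ i A hA) _ _).1 ?_⟩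
    rw [← hπ i.val i.2.le, ← hπ (i.val + 1) i.2]
    exact h3 i A hA
  have h32 : (∃ P : ℕ → Matrix (Fin n) (Fin n) ℝ, (∀ i, i ≤ m → IsPerm (P i)) ∧ P m = P 0 ∧
        ∀ i : Fin m, ∀ A, IsRS A →
          InRn (φ i A - P i.val * partDS A * (P (i.val + 1))ᵀ)) →
      (∀ A : Fin m → Matrix (Fin n) (Fin n) ℝ, (∀ i, IsRS (A i)) →
        ((List.ofFn fun i => φ i (A i)).prod).charpoly = ((List.ofFn A).prod).charpoly) := by
    rintro ⟨P, h⟩ A hA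
    obtain ⟨π, hπ, hπ'⟩ := hP P h
    have hm0 : fMat (π m).symm = fMat (π 0).symm := by
      rw [← fMat_transpose, ← fMat_transpose, ← hπ m le_rfl, ← hπ 0 (Nat.zero_le _), h.2.1]
    have h1 := prod_modR m φ hφ π hπ' A hA
    rw [h1.charpoly_eq hn0 (isRS_prod _ fun i => hφ i _ (hA i))
      (((isRS_fMat _).mul (isRS_prod _ hA)).mul (isRS_fMat _)), hm0, charpoly_conj]
  have h21 : (∀ A : Fin m → Matrix (Fin n) (Fin n) ℝ, (∀ i, IsRS (A i)) →
        ((List.ofFn fun i => φ i (A i)).prod).charpoly = ((List.ofFn A).prod).charpoly) →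
      (∀ A : Fin m → Matrix (Fin n) (Fin n) ℝ, (∀ i, IsRS (A i)) →
        ((List.ofFn fun i => φ i (A i)).prod).trace = ((List.ofFn A).prod).trace) := by
    intro h A hA
    rw [Matrix.trace_eq_neg_charpoly_coeff, h A hA, ← Matrix.trace_eq_neg_charpoly_coeff]
  refine ⟨⟨fun h => h32 (h13 h), h21⟩, ⟨h13, fun h => h21 (h32 h)⟩, ?_⟩
  rintro - ℓ ⟨L, hL⟩ P hPℓ
  obtain ⟨π, hπ, hπ'⟩ := hP P hPℓ
  rw [hπ ℓ.val ℓ.2.le, hπ (ℓ.val + 1) ℓ.2, fMat_transpose]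
  set σ := π ℓ.val
  set τ := π (ℓ.val + 1)
  have hψ : ∀ A, IsRS A → IsRS (untwist σ τ L A) := fun A hA =>
    ((isRS_fMat _).mul (hL A hA ▸ hφ ℓ A hA)).mul (isRS_fMat _)
  have hψ' : ∀ A, IsRS A → ModR (untwist σ τ L A) A := fun A hA =>
    untwist_modR (hL A hA ▸ hπ' ℓ A hA)
  refine ⟨?_, fun hn3 A hA => ?_⟩
  · rintro rfl
    obtain ⟨c, hc, hcA⟩ := exists_of_modR_two hψ hψ'
    refine ⟨c, hc, fun A hA => ?_⟩
    rw [hL A hA, eq_twist σ τ (hcA A hA), mul_add, add_mul]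
    congr 1
    -- `P * (e vᵀ) = e vᵀ` for a permutation matrix `P`.
    have e : fMat σ * partR A = partR A := by
      ext i j
      simp [fMat_mul_apply, partR, vecMulVec_apply]
    rw [Matrix.mul_smul, Matrix.smul_mul, e]
  · rw [hL A hA]
    exact eq_twist σ τ (eq_self_of_modR hn3 hψ hψ' hA)
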